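/- arXiv:1605.03905 — 3 statements merged into one kernel-verified Lean document; each statement's English description precedes it below -/
import Mathlib

section
/- Let τ be an F-thin time with exhausting sequence (T_n)_{n≥1} and partition (C_n)_{n≥0}. Then F is immersed in F^τ (i.e., every F-martingale is an F^τ-martingale) if and only if for each n ≥ 1 one has E[1_{C_n} | F_∞] = E[1_{C_n} | F_{T_n}] P-a.s., where F_{T_n} := {A ∈ 𝒢 : A ∩ {T_n ≤ t} ∈ F_t for all t ≥ 0} is the σ-algebra of the stopping time T_n and F_∞ := σ(⋃_{t≥0} F_t). Equivalently, F is immersed in F^τ if and only if for each n ≥ 1 the set C_n is conditionally independent of F_∞ given F_{T_n}. -/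
/-!
Write `F_∞` for `⨆ t, F t`, `C_n` for `{τ = T n < ∞}` and `F_{T n}` for the σ-algebra of `T n`.
Immersion of `F` in a larger filtration `G` means that every event `D ∈ G u` satisfies
`P[1_D | F u] = P[1_D | F_∞]` (`CondStable`; see `Immersed.condStable`, `immersed_of_condStable`).
With this reformulation neither optional stopping nor martingale convergence is needed.

If `F` is immersed in the progressive enlargement, apply this to the events
`{τ = T n ≤ r} = C_n ∩ {T n ≤ r}`, which are in the enlargement at time `r`: the restriction of
`Z = P[1_{C_n} | F_∞]` to `{T n ≤ r}` has an `F r`-measurable version, so by completeness it is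
`F r`-measurable. As `Z = 0` a.s. on `{T n = ∞}`, `Z` has an `F_{T n}`-measurable version, and thus
equals `P[1_{C_n} | F_{T n}]` (`condExp_eq_of_immersed`).

Conversely, if `P[1_{C_n} | F_∞] = P[1_{C_n} | F_{T n}]` for all `n`, then for `A ∈ F u` and `s ≤ u`
the sets `A ∩ {T n ≤ s} ∩ C_n` are stable at time `u` (`condStable_piece`). Almost surely
`A ∩ {τ ≤ s}` is their disjoint union over `n`, and sets of this form and `A` itself make up a
π-system generating the enlargement before right-continuous regularization
(`condStable_rawEnlarge`). Right-continuity and completeness of `F` carry stability over to the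
intersection over `u > s` (`condStable_of_forall_gt`).

Conditional independence of `C_n` and `F_∞` given `F_{T n}` is a reformulation for each `n`
separately (`condExp_eq_iff_condIndep`). Here `F_{T n}` contains all measurable subsets of
`{T n = ∞}`, so it need not lie in `F_∞`; this does no harm because `C_n ⊆ {T n < ∞}`.
-/

open MeasureTheory MeasurableSpace Set
open scoped NNReal ENNReal symmDiff

noncomputable section

variable {Ω : Type*}

/-- `T` is an `F`-stopping time with values in `[0,∞]`. -/
def IsStoppingTimeE (F : ℝ≥0 → MeasurableSpace Ω) (T : Ω → ℝ≥0∞) : Prop :=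
  ∀ t : ℝ≥0, MeasurableSet[F t] {ω | T ω ≤ (t : ℝ≥0∞)}

/-- The members of the sequence `T` have pairwise disjoint graphs. -/
def DisjointGraphs [MeasurableSpace Ω] (P : Measure Ω) (T : ℕ → Ω → ℝ≥0∞) : Prop :=
  ∀ n m, n ≠ m → P {ω | T n ω = T m ω ∧ T n ω < ∞} = 0

/-- `T` is an exhausting sequence of the random time `τ`. -/
def ExhaustingSeq [MeasurableSpace Ω] (P : Measure Ω) (F : ℝ≥0 → MeasurableSpace Ω)
    (τ : Ω → ℝ≥0∞) (T : ℕ → Ω → ℝ≥0∞) : Prop :=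
  (∀ n, IsStoppingTimeE F (T n)) ∧ DisjointGraphs P T ∧
    (∀ᵐ ω ∂P, τ ω < ∞ → ∃ n, τ ω = T n ω)

/-- `τ` is an `F`-thin time. -/
def IsThinTime [MeasurableSpace Ω] (P : Measure Ω) (F : ℝ≥0 → MeasurableSpace Ω)
    (τ : Ω → ℝ≥0∞) : Prop :=
  ∃ T : ℕ → Ω → ℝ≥0∞, ExhaustingSeq P F τ T

/-- `τ` is an `F`-thick time: it avoids all `F`-stopping times. -/
def IsThickTime [MeasurableSpace Ω] (P : Measure Ω) (F : ℝ≥0 → MeasurableSpace Ω)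
    (τ : Ω → ℝ≥0∞) : Prop :=
  ∀ T : Ω → ℝ≥0∞, IsStoppingTimeE F T → P {ω | τ ω = T ω ∧ τ ω < ∞} = 0

/-- The filtration `F` (of sub-σ-algebras of the ambient σ-algebra) satisfies the
usual conditions: monotone, right-continuous and complete. -/
def UsualConditions [m𝒢 : MeasurableSpace Ω] (P : Measure Ω)
    (F : ℝ≥0 → MeasurableSpace Ω) : Prop :=
  Monotone F ∧ (∀ t, F t ≤ m𝒢) ∧ (∀ t : ℝ≥0, F t = ⨅ u ∈ Set.Ioi t, F u) ∧
    (∀ s : Set Ω, P s = 0 → MeasurableSet[F 0] s)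

/-- The progressive enlargement `F^ρ` of `F` with the random time `ρ`. -/
def progEnlarge (F : ℝ≥0 → MeasurableSpace Ω) (ρ : Ω → ℝ≥0∞) (t : ℝ≥0) :
    MeasurableSpace Ω :=
  ⨅ u ∈ Set.Ioi t, (F u ⊔ MeasurableSpace.generateFrom
    {A : Set Ω | ∃ s : ℝ≥0, s ≤ u ∧ A = {ω | ρ ω ≤ (s : ℝ≥0∞)}})

/-- The σ-algebra `σ(C_n : n ≥ 0)` generated by the partition of a thin time `τ` with
exhausting sequence `T`, where `C_0 = {τ = ∞}` and `C_n = {τ = T_n < ∞}` for `n ≥ 1`. -/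
def partitionSigma (τ : Ω → ℝ≥0∞) (T : ℕ → Ω → ℝ≥0∞) : MeasurableSpace Ω :=
  MeasurableSpace.generateFrom
    ({{ω | τ ω = ∞}} ∪ Set.range fun n => {ω | τ ω = T n ω ∧ τ ω < ∞})

/-- The initial enlargement of `F` with a σ-algebra `𝒞`. -/
def initEnlarge (F : ℝ≥0 → MeasurableSpace Ω) (𝒞 : MeasurableSpace Ω) (t : ℝ≥0) :
    MeasurableSpace Ω :=
  ⨅ s ∈ Set.Ioi t, (F s ⊔ 𝒞)

/-- `M` is a martingale with respect to the filtration `G` under `P`. -/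
def IsMartingaleWrt [MeasurableSpace Ω] (P : Measure Ω) (G : ℝ≥0 → MeasurableSpace Ω)
    (M : ℝ≥0 → Ω → ℝ) : Prop :=
  (∀ t, StronglyMeasurable[G t] (M t)) ∧ (∀ t, Integrable (M t) P) ∧
    ∀ s t : ℝ≥0, s ≤ t → P[M t | G s] =ᵐ[P] M s

/-- `F` is immersed in `G`: every `F`-martingale is a `G`-martingale. -/
def Immersed [MeasurableSpace Ω] (P : Measure Ω) (F G : ℝ≥0 → MeasurableSpace Ω) : Prop :=
  ∀ M : ℝ≥0 → Ω → ℝ, IsMartingaleWrt P F M → IsMartingaleWrt P G M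

/-- The σ-algebra `F_T` of the stopping time `T`. -/
def stoppingSigma [m𝒢 : MeasurableSpace Ω] (F : ℝ≥0 → MeasurableSpace Ω) (T : Ω → ℝ≥0∞)
    (hT : IsStoppingTimeE F T) : MeasurableSpace Ω where
  MeasurableSet' A := MeasurableSet[m𝒢] A ∧
    ∀ t : ℝ≥0, MeasurableSet[F t] (A ∩ {ω | T ω ≤ (t : ℝ≥0∞)})
  measurableSet_empty :=
    ⟨MeasurableSet.empty, fun t => by
      simp only [Set.empty_inter]
      exact @MeasurableSet.empty Ω (F t)⟩
  measurableSet_compl := by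
    rintro A ⟨hA, hA'⟩
    refine ⟨hA.compl, fun t => ?_⟩
    have h : Aᶜ ∩ {ω | T ω ≤ (t : ℝ≥0∞)}
        = {ω | T ω ≤ (t : ℝ≥0∞)} \ (A ∩ {ω | T ω ≤ (t : ℝ≥0∞)}) := by
      ext ω; simp only [Set.mem_inter_iff, Set.mem_compl_iff, Set.mem_diff, Set.mem_setOf_eq]
      tauto
    rw [h]
    exact (hT t).diff (hA' t)
  measurableSet_iUnion := by
    intro f hf
    refine ⟨MeasurableSet.iUnion fun n => (hf n).1, fun t => ?_⟩
    rw [Set.iUnion_inter]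
    exact MeasurableSet.iUnion fun n => (hf n).2 t

/-- `τ` is an `F`-honest time. -/
def IsHonestTime [MeasurableSpace Ω] (P : Measure Ω) (F : ℝ≥0 → MeasurableSpace Ω)
    (τ : Ω → ℝ≥0∞) : Prop :=
  ∀ t : ℝ≥0, 0 < t → ∃ σ : Ω → ℝ≥0∞, Measurable[F t] σ ∧
    ∀ᵐ ω ∂P, τ ω < (t : ℝ≥0∞) → τ ω = σ ω

/-- `(τ₁, τ₂)` is a thin-thick decomposition of the random time `τ`. -/
def ThinThickDecomp [MeasurableSpace Ω] (P : Measure Ω) (F : ℝ≥0 → MeasurableSpace Ω)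
    (τ τ₁ τ₂ : Ω → ℝ≥0∞) : Prop :=
  IsThinTime P F τ₁ ∧ IsThickTime P F τ₂ ∧
    (∀ᵐ ω ∂P, τ ω = min (τ₁ ω) (τ₂ ω)) ∧ (∀ᵐ ω ∂P, max (τ₁ ω) (τ₂ ω) = ∞)


/-! ### Conditional expectations of indicators -/

lemma integrable_indicator_one {m0 : MeasurableSpace Ω} {P : Measure Ω} [IsProbabilityMeasure P]
    {D : Set Ω} (hD : MeasurableSet D) : Integrable (D.indicator (fun _ => (1 : ℝ))) P :=
  (integrable_const 1).indicator hD

lemma norm_condExp_indicator_le {m m0 : MeasurableSpace Ω} {P : Measure Ω} (D : Set Ω) :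
    ∀ᵐ x ∂P, ‖(P[D.indicator (fun _ => (1 : ℝ)) | m]) x‖ ≤ 1 := by
  have h := ae_bdd_abs_condExp_of_ae_bdd_abs (m := m) (μ := P) (R := 1)
    (f := D.indicator (fun _ => (1 : ℝ))) (Filter.Eventually.of_forall fun x => by
      by_cases hx : x ∈ D <;> simp [hx])
  simpa using h

/-- The conditional probability of an event contained in `S ∈ m` vanishes off `S`. -/
lemma condExp_indicator_eq_of_subset {m m0 : MeasurableSpace Ω} {P : Measure Ω}
    [IsProbabilityMeasure P] {C S : Set Ω}
    (hC : MeasurableSet C) (hCS : C ⊆ S) (hS : MeasurableSet[m] S) :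
    P[C.indicator (fun _ => (1 : ℝ)) | m]
      =ᵐ[P] S.indicator (P[C.indicator (fun _ => (1 : ℝ)) | m]) := by
  have h := condExp_indicator (m := m) (integrable_indicator_one (P := P) hC) hS
  rwa [indicator_indicator, inter_eq_self_of_subset_right hCS] at h

lemma setIntegral_eq_integral_indicator_mul {m0 : MeasurableSpace Ω} {P : Measure Ω} {D : Set Ω}
    (hD : MeasurableSet D) (f : Ω → ℝ) :
    ∫ x in D, f x ∂P = ∫ x, D.indicator (fun _ => (1 : ℝ)) x * f x ∂P := by
  rw [← integral_indicator hD]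
  congr 1
  ext x
  by_cases hx : x ∈ D <;> simp [hx]

/-- Self-adjointness of the conditional expectation, tested against the indicator of a set. -/
lemma setIntegral_condExp_swap {m m0 : MeasurableSpace Ω} {P : Measure Ω} [IsProbabilityMeasure P]
    (hm : m ≤ m0) {D : Set Ω} (hD : MeasurableSet D) {X : Ω → ℝ} (hX : Integrable X P) :
    ∫ x in D, (P[X | m]) x ∂P
      = ∫ x, (P[D.indicator (fun _ => (1 : ℝ)) | m]) x * X x ∂P := by
  have hDi := integrable_indicator_one (P := P) hD
  have h1 : P[D.indicator (fun _ => (1 : ℝ)) * P[X | m] | m]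
      =ᵐ[P] P[D.indicator (fun _ => (1 : ℝ)) | m] * P[X | m] :=
    condExp_mul_of_stronglyMeasurable_right stronglyMeasurable_condExp
      (integrable_condExp.bdd_mul (c := 1) hDi.aestronglyMeasurable
        (Filter.Eventually.of_forall fun x => by by_cases hx : x ∈ D <;> simp [hx])) hDi
  have h2 : P[P[D.indicator (fun _ => (1 : ℝ)) | m] * X | m]
      =ᵐ[P] P[D.indicator (fun _ => (1 : ℝ)) | m] * P[X | m] :=
    condExp_mul_of_stronglyMeasurable_left stronglyMeasurable_condExp
      (hX.bdd_mul (c := 1) integrable_condExp.aestronglyMeasurable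
        (norm_condExp_indicator_le D)) hX
  rw [setIntegral_eq_integral_indicator_mul hD]
  calc ∫ x, D.indicator (fun _ => (1 : ℝ)) x * (P[X | m]) x ∂P
      = ∫ x, (P[D.indicator (fun _ => (1 : ℝ)) * P[X | m] | m]) x ∂P :=
        (integral_condExp hm).symm
    _ = ∫ x, (P[P[D.indicator (fun _ => (1 : ℝ)) | m] * X | m]) x ∂P :=
        integral_congr_ae (h1.trans h2.symm)
    _ = ∫ x, (P[D.indicator (fun _ => (1 : ℝ)) | m]) x * X x ∂P := integral_condExp hm

lemma setIntegral_indicator_comm {m0 : MeasurableSpace Ω} {P : Measure Ω} {A D : Set Ω}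
    (hA : MeasurableSet A) (hD : MeasurableSet D) :
    ∫ x in D, A.indicator (fun _ => (1 : ℝ)) x ∂P
      = ∫ x in A, D.indicator (fun _ => (1 : ℝ)) x ∂P := by
  rw [setIntegral_eq_integral_indicator_mul hD, setIntegral_eq_integral_indicator_mul hA]
  simp_rw [mul_comm]

lemma setIntegral_condExp_indicator_comm {m m0 : MeasurableSpace Ω} {P : Measure Ω}
    [IsProbabilityMeasure P] (hm : m ≤ m0) {A D : Set Ω}
    (hA : MeasurableSet A) (hD : MeasurableSet D) :
    ∫ x in D, (P[A.indicator (fun _ => (1 : ℝ)) | m]) x ∂P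
      = ∫ x in A, (P[D.indicator (fun _ => (1 : ℝ)) | m]) x ∂P := by
  rw [setIntegral_condExp_swap hm hD (integrable_indicator_one hA),
    setIntegral_eq_integral_indicator_mul hA]
  simp_rw [mul_comm]

/-- Dynkin's π-λ argument for the equality of two set integrals. -/
lemma setIntegral_eq_of_piSystem {m0 : MeasurableSpace Ω} {P : Measure Ω} {S : Set (Set Ω)}
    (hpi : IsPiSystem S) (hle : MeasurableSpace.generateFrom S ≤ m0) {f g : Ω → ℝ}
    (hf : Integrable f P) (hg : Integrable g P) (huniv : ∫ x, f x ∂P = ∫ x, g x ∂P)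
    (h : ∀ D ∈ S, ∫ x in D, f x ∂P = ∫ x in D, g x ∂P) (D : Set Ω)
    (hD : MeasurableSet[MeasurableSpace.generateFrom S] D) :
    ∫ x in D, f x ∂P = ∫ x in D, g x ∂P := by
  induction D, hD using MeasurableSpace.induction_on_inter (m := MeasurableSpace.generateFrom S)
    rfl hpi with
  | empty => simp
  | basic t ht => exact h t ht
  | compl t ht ih =>
    have h1 := integral_add_compl (hle t ht) hf
    have h2 := integral_add_compl (hle t ht) hg
    linarith
  | iUnion s hd hm ih =>
    rw [integral_iUnion (fun i => hle _ (hm i)) hd hf.integrableOn,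
      integral_iUnion (fun i => hle _ (hm i)) hd hg.integrableOn]
    simp_rw [ih]

/-! ### Complete filtrations -/

/-- A complete σ-algebra contains every modification, on a null set, of its members. -/
lemma measurableSet_of_ae_eq {m m0 : MeasurableSpace Ω} {P : Measure Ω}
    (hc : ∀ s : Set Ω, P s = 0 → MeasurableSet[m] s) {s t : Set Ω} (hst : s =ᵐ[P] t)
    (ht : MeasurableSet[m] t) : MeasurableSet[m] s := by
  obtain ⟨h1, h2⟩ := ae_eq_set.1 hst
  have : s = (t \ (t \ s)) ∪ (s \ t) := by
    ext x; simp only [mem_union, mem_sdiff]; tauto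
  rw [this]
  exact (ht.diff (hc _ h2)).union (hc _ h1)

lemma stronglyMeasurable_of_ae_eq {m m0 : MeasurableSpace Ω} {P : Measure Ω}
    (hc : ∀ s : Set Ω, P s = 0 → MeasurableSet[m] s) {f g : Ω → ℝ} (hfg : f =ᵐ[P] g)
    (hg : StronglyMeasurable[m] g) : StronglyMeasurable[m] f := by
  refine Measurable.stronglyMeasurable fun B hB => ?_
  refine measurableSet_of_ae_eq hc (t := g ⁻¹' B) ?_ (hg.measurable hB)
  filter_upwards [hfg] with x hx
  change (f x ∈ B) = (g x ∈ B)
  rw [hx]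

lemma isPiSystem_iUnion_filtration {F : ℝ≥0 → MeasurableSpace Ω} (hmono : Monotone F) :
    IsPiSystem {A : Set Ω | ∃ t, MeasurableSet[F t] A} := by
  rintro A ⟨s, hA⟩ B ⟨t, hB⟩ -
  exact ⟨max s t, (hmono (le_max_left s t) A hA).inter (hmono (le_max_right s t) B hB)⟩

lemma iSup_filtration_eq (F : ℝ≥0 → MeasurableSpace Ω) :
    (⨆ t, F t) = MeasurableSpace.generateFrom {A : Set Ω | ∃ t, MeasurableSet[F t] A} := by
  rw [MeasurableSpace.measurableSpace_iSup_eq]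

lemma setOf_lt_top_eq (T : Ω → ℝ≥0∞) :
    {ω | T ω < ∞} = ⋃ k : ℕ, {ω | T ω ≤ ((k : ℝ≥0) : ℝ≥0∞)} := by
  ext ω
  simp only [mem_ofPred_eq, mem_iUnion]
  constructor
  · intro h
    obtain ⟨k, hk⟩ := exists_nat_ge (T ω).toNNReal
    refine ⟨k, ?_⟩
    rw [← ENNReal.coe_toNNReal h.ne]
    exact_mod_cast hk
  · rintro ⟨k, hk⟩
    exact hk.trans_lt ENNReal.coe_lt_top

/-! ### The progressive enlargement -/

/-- The enlargement of `F u` by the events `{τ ≤ s}`, `s ≤ u`, whose right-continuous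
regularization is `progEnlarge`. -/
def rawEnlarge (F : ℝ≥0 → MeasurableSpace Ω) (τ : Ω → ℝ≥0∞) (u : ℝ≥0) : MeasurableSpace Ω :=
  F u ⊔ MeasurableSpace.generateFrom
    {A : Set Ω | ∃ s : ℝ≥0, s ≤ u ∧ A = {ω | τ ω ≤ (s : ℝ≥0∞)}}

lemma rawEnlarge_mono {F : ℝ≥0 → MeasurableSpace Ω} (hmono : Monotone F) (τ : Ω → ℝ≥0∞) :
    Monotone (rawEnlarge F τ) := by
  intro u v huv
  refine sup_le_sup (hmono huv) (MeasurableSpace.generateFrom_mono ?_)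
  rintro A ⟨s, hs, rfl⟩
  exact ⟨s, hs.trans huv, rfl⟩

lemma rawEnlarge_le_progEnlarge {F : ℝ≥0 → MeasurableSpace Ω} (hmono : Monotone F)
    (τ : Ω → ℝ≥0∞) (t : ℝ≥0) :
    rawEnlarge F τ t ≤ progEnlarge F τ t :=
  le_iInf₂ fun _ hu => rawEnlarge_mono hmono τ (le_of_lt hu)

lemma progEnlarge_le_rawEnlarge {F : ℝ≥0 → MeasurableSpace Ω} {τ : Ω → ℝ≥0∞}
    {t u : ℝ≥0} (htu : t < u) :
    progEnlarge F τ t ≤ rawEnlarge F τ u :=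
  iInf₂_le u htu

/-- Whether `τ = T ≤ r` is decided by the comparisons of `τ` and of `T` with levels up to `r`. -/
lemma measurableSet_rawEnlarge_eq {F : ℝ≥0 → MeasurableSpace Ω} (hmono : Monotone F)
    (τ : Ω → ℝ≥0∞) {T : Ω → ℝ≥0∞}
    (hT : IsStoppingTimeE F T) (r : ℝ≥0) :
    MeasurableSet[rawEnlarge F τ r] {ω | τ ω = T ω ∧ T ω ≤ (r : ℝ≥0∞)} := by
  have h1 : ∀ s ≤ r, MeasurableSet[rawEnlarge F τ r] {ω | T ω ≤ (s : ℝ≥0∞)} := fun s hs =>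
    (le_sup_left : F r ≤ rawEnlarge F τ r) _ (hmono hs _ (hT s))
  have h2 : ∀ s ≤ r, MeasurableSet[rawEnlarge F τ r] {ω | τ ω ≤ (s : ℝ≥0∞)} := fun s hs =>
    (le_sup_right : _ ≤ rawEnlarge F τ r) _ (MeasurableSpace.measurableSet_generateFrom
      ⟨s, hs, rfl⟩)
  have : {ω | τ ω = T ω ∧ T ω ≤ (r : ℝ≥0∞)} =
      ({ω | T ω ≤ (r : ℝ≥0∞)} ∩ {ω | τ ω ≤ (r : ℝ≥0∞)}) ∩
        ⋂ q : ℚ, ({ω | T ω ≤ ((min (Real.toNNReal q) r : ℝ≥0) : ℝ≥0∞)}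
            ∩ {ω | τ ω ≤ ((min (Real.toNNReal q) r : ℝ≥0) : ℝ≥0∞)})
          ∪ ({ω | T ω ≤ ((min (Real.toNNReal q) r : ℝ≥0) : ℝ≥0∞)}ᶜ
            ∩ {ω | τ ω ≤ ((min (Real.toNNReal q) r : ℝ≥0) : ℝ≥0∞)}ᶜ) := by
    ext ω
    simp only [mem_ofPred_eq, mem_inter_iff, mem_iInter, mem_union, mem_compl_iff]
    constructor
    · rintro ⟨h, hr⟩
      rw [h]
      exact ⟨⟨hr, hr⟩, fun q => by tauto⟩
    · rintro ⟨⟨hTr, hτr⟩, h⟩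
      refine ⟨?_, hTr⟩
      by_contra hne
      rcases lt_or_gt_of_ne hne with hlt | hlt
      · obtain ⟨q, -, hq1, hq2⟩ := ENNReal.lt_iff_exists_rat_btwn.1 hlt
        have hqr : Real.toNNReal q ≤ r := by exact_mod_cast hq2.le.trans hTr
        have := h q
        rw [min_eq_left hqr] at this
        rcases this with h | h
        · exact absurd h.1 (not_le.2 hq2)
        · exact h.2 hq1.le
      · obtain ⟨q, -, hq1, hq2⟩ := ENNReal.lt_iff_exists_rat_btwn.1 hlt
        have hqr : Real.toNNReal q ≤ r := by exact_mod_cast hq2.le.trans hτr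
        have := h q
        rw [min_eq_left hqr] at this
        rcases this with h | h
        · exact absurd h.2 (not_le.2 hq2)
        · exact h.1 hq1.le
  rw [this]
  refine ((h1 r le_rfl).inter (h2 r le_rfl)).inter (MeasurableSet.iInter fun q => ?_)
  have hq : min (Real.toNNReal q) r ≤ r := min_le_right _ _
  exact ((h1 _ hq).inter (h2 _ hq)).union ((h1 _ hq).compl.inter (h2 _ hq).compl)

/-- The π-system of the sets `A` and `A ∩ {τ ≤ s}` with `A ∈ F u` and `s ≤ u`, which generates
`rawEnlarge F τ u`. -/
def rawPi (F : ℝ≥0 → MeasurableSpace Ω) (τ : Ω → ℝ≥0∞) (u : ℝ≥0) : Set (Set Ω) :=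
  {D | ∃ A, MeasurableSet[F u] A ∧
    (D = A ∨ ∃ s : ℝ≥0, s ≤ u ∧ D = A ∩ {ω | τ ω ≤ (s : ℝ≥0∞)})}

lemma isPiSystem_rawPi (F : ℝ≥0 → MeasurableSpace Ω) (τ : Ω → ℝ≥0∞) (u : ℝ≥0) :
    IsPiSystem (rawPi F τ u) := by
  rintro _ ⟨A, hA, rfl | ⟨s, hs, rfl⟩⟩ _ ⟨B, hB, rfl | ⟨t, ht, rfl⟩⟩ -
  · exact ⟨_, hA.inter hB, Or.inl rfl⟩
  · exact ⟨_, hA.inter hB, Or.inr ⟨t, ht, by ext; simp; tauto⟩⟩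
  · exact ⟨_, hA.inter hB, Or.inr ⟨s, hs, by ext; simp; tauto⟩⟩
  · exact ⟨_, hA.inter hB, Or.inr ⟨min s t, (min_le_left s t).trans hs, by ext; simp; tauto⟩⟩

lemma generateFrom_rawPi (F : ℝ≥0 → MeasurableSpace Ω) (τ : Ω → ℝ≥0∞) (u : ℝ≥0) :
    MeasurableSpace.generateFrom (rawPi F τ u) = rawEnlarge F τ u := by
  apply le_antisymm
  · refine MeasurableSpace.generateFrom_le ?_
    have h1 : F u ≤ rawEnlarge F τ u := le_sup_left
    rintro _ ⟨A, hA, rfl | ⟨s, hs, rfl⟩⟩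
    · exact h1 _ hA
    · exact (h1 _ hA).inter ((le_sup_right : _ ≤ rawEnlarge F τ u) _
        (MeasurableSpace.measurableSet_generateFrom ⟨s, hs, rfl⟩))
  · refine sup_le (fun A hA => MeasurableSpace.measurableSet_generateFrom ⟨A, hA, Or.inl rfl⟩)
      (MeasurableSpace.generateFrom_mono ?_)
    rintro _ ⟨s, hs, rfl⟩
    exact ⟨univ, MeasurableSet.univ, Or.inr ⟨s, hs, by simp⟩⟩

/-! ### Immersion and stability of events -/

/-- The event `D` gives the same conditional probability at time `u` as at infinity.
Immersion of `F` in a filtration amounts to this for all its events at time `u`. -/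
def CondStable [MeasurableSpace Ω] (P : Measure Ω) (F : ℝ≥0 → MeasurableSpace Ω) (u : ℝ≥0)
    (D : Set Ω) : Prop :=
  P[D.indicator (fun _ => (1 : ℝ)) | F u] =ᵐ[P] P[D.indicator (fun _ => (1 : ℝ)) | ⨆ t, F t]

section Filtration

variable [m𝒢 : MeasurableSpace Ω] {P : Measure Ω} [IsProbabilityMeasure P]
  {F : ℝ≥0 → MeasurableSpace Ω}

lemma condStable_iff (hle : ∀ t, F t ≤ m𝒢) {u : ℝ≥0} {D : Set Ω} (hD : MeasurableSet D) :
    CondStable P F u D ↔ ∀ A, MeasurableSet[⨆ t, F t] A →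
      ∫ x in D, A.indicator (fun _ => (1 : ℝ)) x ∂P
        = ∫ x in D, (P[A.indicator (fun _ => (1 : ℝ)) | F u]) x ∂P := by
  have hinf : (⨆ t, F t) ≤ m𝒢 := iSup_le hle
  constructor
  · intro h A hA
    rw [setIntegral_indicator_comm (hinf A hA) hD,
      setIntegral_condExp_indicator_comm (hle u) (hinf A hA) hD,
      ← setIntegral_condExp hinf (integrable_indicator_one hD) hA]
    exact setIntegral_congr_ae (hinf A hA) (h.mono fun x hx _ => hx.symm)
  · intro h
    refine ae_eq_condExp_of_forall_setIntegral_eq hinf (integrable_indicator_one hD)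
      (fun _ _ _ => integrable_condExp.integrableOn) (fun A hA _ => ?_)
      (stronglyMeasurable_condExp.mono (le_iSup F u)).aestronglyMeasurable
    rw [← setIntegral_indicator_comm (hinf A hA) hD,
      ← setIntegral_condExp_indicator_comm (hle u) (hinf A hA) hD, h A hA]

/-- It is enough to find an `F u`-measurable version of the conditional probability of `D`
given `F_∞`. -/
lemma condStable_of_aestronglyMeasurable (hle : ∀ t, F t ≤ m𝒢) {u : ℝ≥0} {D : Set Ω}
    (h : AEStronglyMeasurable[F u] (P[D.indicator (fun _ => (1 : ℝ)) | ⨆ t, F t]) P) :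
    CondStable P F u D :=
  (condExp_condExp_of_le (le_iSup F u) (iSup_le hle)).symm.trans
    (condExp_of_aestronglyMeasurable' (hle u) h integrable_condExp)

/-- Under immersion, applied to the `F`-martingales `s ↦ P[1_B | F s]` with `B ∈ F t`, the events
of the larger filtration are stable; a π-λ argument passes from `B ∈ F t` to all of `F_∞`. -/
lemma Immersed.condStable (hmono : Monotone F) (hle : ∀ t, F t ≤ m𝒢)
    {G : ℝ≥0 → MeasurableSpace Ω} (hG : ∀ t, G t ≤ m𝒢) (h : Immersed P F G)
    {u : ℝ≥0} {D : Set Ω} (hD : MeasurableSet[G u] D) : CondStable P F u D := by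
  have hinf : (⨆ t, F t) ≤ m𝒢 := iSup_le hle
  have hD' := hG u D hD
  refine ae_eq_condExp_of_forall_setIntegral_eq hinf (integrable_indicator_one hD')
    (fun _ _ _ => integrable_condExp.integrableOn) (fun A hA _ => ?_)
    (stronglyMeasurable_condExp.mono (le_iSup F u)).aestronglyMeasurable
  rw [iSup_filtration_eq] at hA
  refine setIntegral_eq_of_piSystem (isPiSystem_iUnion_filtration hmono)
    (iSup_filtration_eq F ▸ hinf) integrable_condExp (integrable_indicator_one hD')
    (integral_condExp (hle u)) ?_ A hA
  rintro B ⟨t, hB⟩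
  have hB' := hle t B hB
  rw [← setIntegral_condExp_indicator_comm (hle u) hB' hD',
    ← setIntegral_indicator_comm hB' hD']
  have hM : IsMartingaleWrt P F (fun s => P[B.indicator (fun _ => (1 : ℝ)) | F s]) :=
    ⟨fun _ => stronglyMeasurable_condExp, fun _ => integrable_condExp,
      fun r s hrs => condExp_condExp_of_le (hmono hrs) (hle s)⟩
  have h1 := (h _ hM).2.2 u (max t u) (le_max_right t u)
  have h2 : P[B.indicator (fun _ => (1 : ℝ)) | F (max t u)] = B.indicator (fun _ => (1 : ℝ)) :=
    condExp_of_stronglyMeasurable (hle _)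
      (stronglyMeasurable_const.indicator (hmono (le_max_left t u) B hB))
      (integrable_indicator_one hB')
  simp only [h2] at h1
  rw [← setIntegral_condExp (hG u) (integrable_indicator_one hB') hD]
  exact setIntegral_congr_ae hD' (h1.mono fun x hx _ => hx.symm)

/-- Conversely, stability of all events of a larger filtration gives immersion. -/
lemma immersed_of_condStable (hle : ∀ t, F t ≤ m𝒢) {G : ℝ≥0 → MeasurableSpace Ω}
    (hG : ∀ t, G t ≤ m𝒢) (hFG : ∀ t, F t ≤ G t)
    (h : ∀ u D, MeasurableSet[G u] D → CondStable P F u D) : Immersed P F G := by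
  have hinf : (⨆ t, F t) ≤ m𝒢 := iSup_le hle
  rintro M ⟨hM1, hM2, hM3⟩
  refine ⟨fun t => (hM1 t).mono (hFG t), hM2, fun s t hst => ?_⟩
  refine (ae_eq_condExp_of_forall_setIntegral_eq (hG s) (hM2 t)
    (fun _ _ _ => (hM2 s).integrableOn) (fun D hD _ => ?_)
    ((hM1 s).mono (hFG s)).aestronglyMeasurable).symm
  have hD' := hG s D hD
  have e1 : P[M t | ⨆ r, F r] = M t :=
    condExp_of_stronglyMeasurable hinf ((hM1 t).mono (le_iSup F t)) (hM2 t)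
  calc ∫ x in D, M s x ∂P = ∫ x in D, (P[M t | F s]) x ∂P :=
        setIntegral_congr_ae hD' ((hM3 s t hst).mono fun x hx _ => hx.symm)
    _ = ∫ x, (P[D.indicator (fun _ => (1 : ℝ)) | F s]) x * M t x ∂P :=
        setIntegral_condExp_swap (hle s) hD' (hM2 t)
    _ = ∫ x, (P[D.indicator (fun _ => (1 : ℝ)) | ⨆ r, F r]) x * M t x ∂P :=
        integral_congr_ae ((h s D hD).mono fun x hx => by simp only [hx])
    _ = ∫ x in D, M t x ∂P := by
        rw [← setIntegral_condExp_swap hinf hD' (hM2 t), e1]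

/-- Stability passes to the limit from the right when `F` satisfies the usual conditions. -/
lemma condStable_of_forall_gt (hUC : UsualConditions P F) {s : ℝ≥0} {D : Set Ω}
    (h : ∀ u, s < u → CondStable P F u D) : CondStable P F s D := by
  obtain ⟨hmono, hle, hright, hcomp⟩ := hUC
  refine condStable_of_aestronglyMeasurable hle (StronglyMeasurable.aestronglyMeasurable ?_)
  refine Measurable.stronglyMeasurable fun B hB => ?_
  rw [hright s]
  simp only [MeasurableSpace.measurableSet_iInf, mem_Ioi]
  intro u hu
  exact (stronglyMeasurable_of_ae_eq (fun t ht => hmono (zero_le (a := u)) t (hcomp t ht))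
    (h u hu).symm stronglyMeasurable_condExp).measurable hB

/-! ### The σ-algebra of a stopping time -/

lemma stoppingSigma_le {T : Ω → ℝ≥0∞} (hT : IsStoppingTimeE F T) :
    stoppingSigma F T hT ≤ m𝒢 := fun _ h => h.1

lemma measurableSet_le_stoppingSigma (hmono : Monotone F) (hle : ∀ t, F t ≤ m𝒢) {T : Ω → ℝ≥0∞}
    (hT : IsStoppingTimeE F T) (r : ℝ≥0) :
    MeasurableSet[stoppingSigma F T hT] {ω | T ω ≤ (r : ℝ≥0∞)} := by
  refine ⟨hle r _ (hT r), fun t => ?_⟩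
  have : {ω | T ω ≤ (r : ℝ≥0∞)} ∩ {ω | T ω ≤ (t : ℝ≥0∞)} = {ω | T ω ≤ ((min r t : ℝ≥0) : ℝ≥0∞)} := by
    ext ω; simp
  rw [this]
  exact hmono (min_le_right r t) _ (hT _)

lemma measurableSet_lt_top_stoppingSigma (hmono : Monotone F) (hle : ∀ t, F t ≤ m𝒢)
    {T : Ω → ℝ≥0∞} (hT : IsStoppingTimeE F T) :
    MeasurableSet[stoppingSigma F T hT] {ω | T ω < ∞} := by
  rw [setOf_lt_top_eq]
  exact MeasurableSet.iUnion fun k => measurableSet_le_stoppingSigma hmono hle hT k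

lemma measurableSet_inter_lt_top {T : Ω → ℝ≥0∞}
    (hT : IsStoppingTimeE F T) {B : Set Ω} (hB : MeasurableSet[stoppingSigma F T hT] B) :
    MeasurableSet[⨆ t, F t] ({ω | T ω < ∞} ∩ B) := by
  rw [setOf_lt_top_eq, iUnion_inter]
  refine MeasurableSet.iUnion fun k => le_iSup F k _ ?_
  rw [inter_comm]
  exact hB.2 k

lemma stronglyMeasurable_indicator_le (hmono : Monotone F) (hle : ∀ t, F t ≤ m𝒢) {T : Ω → ℝ≥0∞}
    (hT : IsStoppingTimeE F T) {f : Ω → ℝ} (hf : StronglyMeasurable[stoppingSigma F T hT] f)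
    (r : ℝ≥0) : StronglyMeasurable[F r] ({ω | T ω ≤ (r : ℝ≥0∞)}.indicator f) := by
  have hS := measurableSet_le_stoppingSigma hmono hle hT r
  refine (hf.indicator hS).stronglyMeasurable_of_measurableSpace_le_on hS (fun t ht => ?_)
    fun x hx => indicator_of_notMem hx _
  have := ht.2 r
  rwa [inter_comm, ← inter_assoc, inter_self] at this

lemma stronglyMeasurable_indicator_lt_top (hmono : Monotone F) (hle : ∀ t, F t ≤ m𝒢)
    {T : Ω → ℝ≥0∞} (hT : IsStoppingTimeE F T) {f : Ω → ℝ}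
    (hf : StronglyMeasurable[stoppingSigma F T hT] f) :
    StronglyMeasurable[⨆ t, F t] ({ω | T ω < ∞}.indicator f) := by
  have hS := measurableSet_lt_top_stoppingSigma hmono hle hT
  refine (hf.indicator hS).stronglyMeasurable_of_measurableSpace_le_on hS (fun t ht => ?_)
    fun x hx => indicator_of_notMem hx _
  have := measurableSet_inter_lt_top hT ht
  rwa [← inter_assoc, inter_self] at this

/-- A function whose restriction to `{T ≤ r}` is `F r`-measurable for all `r` is, on `{T < ∞}`,
measurable for the σ-algebra of `T`. -/
lemma stronglyMeasurable_stoppingSigma (hmono : Monotone F) (hle : ∀ t, F t ≤ m𝒢)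
    {T : Ω → ℝ≥0∞} (hT : IsStoppingTimeE F T) {f : Ω → ℝ} (hf : Measurable f)
    (h : ∀ r : ℝ≥0, Measurable[F r] ({ω | T ω ≤ (r : ℝ≥0∞)}.indicator f)) :
    StronglyMeasurable[stoppingSigma F T hT] ({ω | T ω < ∞}.indicator f) := by
  refine Measurable.stronglyMeasurable fun B hB => ⟨?_, fun r => ?_⟩
  · exact hf.indicator
      (stoppingSigma_le hT _ (measurableSet_lt_top_stoppingSigma hmono hle hT)) hB
  · have : ({ω | T ω < ∞}.indicator f ⁻¹' B) ∩ {ω | T ω ≤ (r : ℝ≥0∞)}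
        = ({ω | T ω ≤ (r : ℝ≥0∞)}.indicator f ⁻¹' B) ∩ {ω | T ω ≤ (r : ℝ≥0∞)} := by
      ext ω
      simp only [mem_inter_iff, mem_preimage, mem_ofPred_eq]
      refine and_congr_left fun hω => ?_
      rw [indicator_of_mem (show ω ∈ {ω | T ω < ∞} from hω.trans_lt ENNReal.coe_lt_top),
        indicator_of_mem (show ω ∈ {ω | T ω ≤ (r : ℝ≥0∞)} from hω)]
    rw [this]
    exact (h r hB).inter (hT r)

/-! ### Conditional independence given the σ-algebra of a stopping time -/

/-- For an event `C ⊆ {T < ∞}`, equality of the conditional probabilities given `F_∞` and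
`F_T` is conditional independence of `C` and `F_∞` given `F_T`. The σ-algebra `F_T` need not be
contained in `F_∞`, but its trace on `{T < ∞}` is. -/
lemma condExp_eq_iff_condIndep (hmono : Monotone F) (hle : ∀ t, F t ≤ m𝒢) {T : Ω → ℝ≥0∞}
    (hT : IsStoppingTimeE F T) {C : Set Ω} (hC : MeasurableSet C) (hCT : C ⊆ {ω | T ω < ∞}) :
    P[C.indicator (fun _ => (1 : ℝ)) | ⨆ t : ℝ≥0, F t]
        =ᵐ[P] P[C.indicator (fun _ => (1 : ℝ)) | stoppingSigma F T hT] ↔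
      ∀ A : Set Ω, MeasurableSet[⨆ t : ℝ≥0, F t] A →
        P[(C ∩ A).indicator (fun _ => (1 : ℝ)) | stoppingSigma F T hT] =ᵐ[P]
        fun ω => (P[C.indicator (fun _ => (1 : ℝ)) | stoppingSigma F T hT]) ω *
          (P[A.indicator (fun _ => (1 : ℝ)) | stoppingSigma F T hT]) ω := by
  have hinf : (⨆ t, F t) ≤ m𝒢 := iSup_le hle
  have hH : stoppingSigma F T hT ≤ m𝒢 := stoppingSigma_le hT
  have hS := measurableSet_lt_top_stoppingSigma hmono hle hT
  have hCi := integrable_indicator_one (P := P) hC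
  have hzero := condExp_indicator_eq_of_subset (P := P) hC hCT hS
  -- `P[1_C | F_T] * 1_A` has the claimed product as its conditional expectation given `F_T`.
  have hYA : ∀ A, MeasurableSet A →
      Integrable (P[C.indicator (fun _ => (1 : ℝ)) | stoppingSigma F T hT] *
        A.indicator (fun _ => (1 : ℝ))) P := fun A hA =>
    (integrable_indicator_one hA).bdd_mul (c := 1) integrable_condExp.aestronglyMeasurable
      (norm_condExp_indicator_le C)
  have hpull : ∀ A, MeasurableSet A →
      P[P[C.indicator (fun _ => (1 : ℝ)) | stoppingSigma F T hT] *
        A.indicator (fun _ => (1 : ℝ)) | stoppingSigma F T hT] =ᵐ[P]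
      P[C.indicator (fun _ => (1 : ℝ)) | stoppingSigma F T hT] *
        P[A.indicator (fun _ => (1 : ℝ)) | stoppingSigma F T hT] := fun A hA =>
    condExp_mul_of_stronglyMeasurable_left stronglyMeasurable_condExp (hYA A hA)
      (integrable_indicator_one hA)
  constructor
  · intro h A hA
    have hA' := hinf A hA
    refine Filter.EventuallyEq.symm ?_
    refine (hpull A hA').symm.trans ?_
    refine ae_eq_condExp_of_forall_setIntegral_eq hH (integrable_indicator_one (hC.inter hA'))
      (fun _ _ _ => integrable_condExp.integrableOn) (fun B hB _ => ?_)
      stronglyMeasurable_condExp.aestronglyMeasurable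
    have hB' := hH B hB
    have hBA : MeasurableSet[⨆ t, F t] (({ω | T ω < ∞} ∩ B) ∩ A) :=
      (measurableSet_inter_lt_top hT hB).inter hA
    rw [setIntegral_condExp hH (hYA A hA') hB]
    calc ∫ x in B, (P[C.indicator (fun _ => (1 : ℝ)) | stoppingSigma F T hT] *
            A.indicator (fun _ => (1 : ℝ))) x ∂P
        = ∫ x in ({ω | T ω < ∞} ∩ B) ∩ A,
            (P[C.indicator (fun _ => (1 : ℝ)) | stoppingSigma F T hT]) x ∂P := by
          rw [← integral_indicator hB', ← integral_indicator (hinf _ hBA)]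
          refine integral_congr_ae ?_
          filter_upwards [hzero] with x hx
          by_cases h1 : x ∈ B <;> by_cases h2 : x ∈ A <;> by_cases h3 : T x < ∞ <;>
            simp_all [indicator]
      _ = ∫ x in ({ω | T ω < ∞} ∩ B) ∩ A,
            (P[C.indicator (fun _ => (1 : ℝ)) | ⨆ t, F t]) x ∂P :=
          setIntegral_congr_ae (hinf _ hBA) (h.mono fun x hx _ => hx.symm)
      _ = ∫ x in ({ω | T ω < ∞} ∩ B) ∩ A, C.indicator (fun _ => (1 : ℝ)) x ∂P :=
          setIntegral_condExp hinf hCi hBA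
      _ = ∫ x in B, (C ∩ A).indicator (fun _ => (1 : ℝ)) x ∂P := by
          rw [← integral_indicator hB', ← integral_indicator (hinf _ hBA)]
          congr 1
          ext x
          have hx : x ∈ C → T x < ∞ := fun hx => hCT hx
          by_cases h1 : x ∈ B <;> by_cases h2 : x ∈ A <;> by_cases h3 : x ∈ C <;>
            simp_all [indicator]
  · intro h
    refine Filter.EventuallyEq.symm ?_
    refine ae_eq_condExp_of_forall_setIntegral_eq hinf hCi
      (fun _ _ _ => integrable_condExp.integrableOn) (fun A hA _ => ?_)
      ⟨_, stronglyMeasurable_indicator_lt_top hmono hle hT stronglyMeasurable_condExp, hzero⟩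
    have hA' := hinf A hA
    calc ∫ x in A, (P[C.indicator (fun _ => (1 : ℝ)) | stoppingSigma F T hT]) x ∂P
        = ∫ x, (P[C.indicator (fun _ => (1 : ℝ)) | stoppingSigma F T hT] *
            A.indicator (fun _ => (1 : ℝ))) x ∂P := by
          rw [setIntegral_eq_integral_indicator_mul hA']
          simp_rw [Pi.mul_apply, mul_comm]
      _ = ∫ x, (P[P[C.indicator (fun _ => (1 : ℝ)) | stoppingSigma F T hT] *
            A.indicator (fun _ => (1 : ℝ)) | stoppingSigma F T hT]) x ∂P :=
          (integral_condExp hH).symm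
      _ = ∫ x, (P[(C ∩ A).indicator (fun _ => (1 : ℝ)) | stoppingSigma F T hT]) x ∂P :=
          integral_congr_ae ((hpull A hA').trans (h A hA).symm)
      _ = ∫ x, (C ∩ A).indicator (fun _ => (1 : ℝ)) x ∂P := integral_condExp hH
      _ = ∫ x in A, C.indicator (fun _ => (1 : ℝ)) x ∂P := by
          rw [← integral_indicator hA', indicator_indicator, inter_comm]

/-! ### Immersion in the progressive enlargement -/

lemma rawEnlarge_le (hle : ∀ t, F t ≤ m𝒢) {τ : Ω → ℝ≥0∞} (hτ : Measurable τ) (u : ℝ≥0) :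
    rawEnlarge F τ u ≤ m𝒢 := by
  refine sup_le (hle u) (MeasurableSpace.generateFrom_le ?_)
  rintro A ⟨s, -, rfl⟩
  exact measurableSet_le hτ measurable_const

lemma progEnlarge_le (hle : ∀ t, F t ≤ m𝒢) {τ : Ω → ℝ≥0∞} (hτ : Measurable τ) (t : ℝ≥0) :
    progEnlarge F τ t ≤ m𝒢 :=
  (progEnlarge_le_rawEnlarge (lt_add_one t)).trans (rawEnlarge_le hle hτ _)

lemma measurable_stoppingTimeE (hle : ∀ t, F t ≤ m𝒢) {T : Ω → ℝ≥0∞} (hT : IsStoppingTimeE F T) :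
    Measurable T := by
  refine measurable_of_Iic fun x => ?_
  induction x with
  | top => simp
  | coe x => exact hle x _ (hT x)

/-- Immersion makes the conditional probability of `{τ = T < ∞}` given `F_∞` a.s. measurable for
`F_T`, hence equal to the one given `F_T`. -/
lemma condExp_eq_of_immersed (hUC : UsualConditions P F) {τ : Ω → ℝ≥0∞} (hτ : Measurable τ)
    (h : Immersed P F (progEnlarge F τ)) {T : Ω → ℝ≥0∞} (hT : IsStoppingTimeE F T) :
    P[({ω | τ ω = T ω ∧ τ ω < ∞}).indicator (fun _ => (1 : ℝ)) | ⨆ t : ℝ≥0, F t] =ᵐ[P]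
      P[({ω | τ ω = T ω ∧ τ ω < ∞}).indicator (fun _ => (1 : ℝ)) | stoppingSigma F T hT] := by
  obtain ⟨hmono, hle, -, hcomp⟩ := hUC
  have hinf : (⨆ t, F t) ≤ m𝒢 := iSup_le hle
  have hTm := measurable_stoppingTimeE hle hT
  set C := {ω | τ ω = T ω ∧ τ ω < ∞} with hCdef
  have hC : MeasurableSet C :=
    (measurableSet_eq_fun hτ hTm).inter (measurableSet_lt hτ measurable_const)
  have hCT : C ⊆ {ω | T ω < ∞} := fun ω hω => hω.1.symm.trans_lt hω.2
  have hCi := integrable_indicator_one (P := P) hC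
  have hS := measurableSet_lt_top_stoppingSigma hmono hle hT
  have hSinf : MeasurableSet[⨆ t, F t] {ω | T ω < ∞} := by
    simpa using measurableSet_inter_lt_top hT MeasurableSet.univ
  have hzero := condExp_indicator_eq_of_subset (P := P) hC hCT hSinf
  refine hzero.trans ?_
  have hZi : Integrable ({ω | T ω < ∞}.indicator
      (P[C.indicator (fun _ => (1 : ℝ)) | ⨆ t, F t])) P :=
    integrable_condExp.indicator (hinf _ hSinf)
  refine ae_eq_condExp_of_forall_setIntegral_eq (stoppingSigma_le hT) hCi
    (fun _ _ _ => hZi.integrableOn) (fun B hB _ => ?_)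
    (StronglyMeasurable.aestronglyMeasurable ?_)
  · have hBS := measurableSet_inter_lt_top hT hB
    rw [setIntegral_indicator (hinf _ hSinf), inter_comm, setIntegral_condExp hinf hCi hBS,
      inter_comm, ← setIntegral_indicator (hinf _ hSinf), indicator_indicator,
      inter_eq_self_of_subset_right hCT]
  · refine stronglyMeasurable_stoppingSigma hmono hle hT
      (stronglyMeasurable_condExp.mono hinf).measurable fun r => ?_
    have hD : CondStable P F r {ω | τ ω = T ω ∧ T ω ≤ (r : ℝ≥0∞)} :=
      h.condStable hmono hle (progEnlarge_le hle hτ)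
        (rawEnlarge_le_progEnlarge hmono τ r _ (measurableSet_rawEnlarge_eq hmono τ hT r))
    have heq : {ω | τ ω = T ω ∧ T ω ≤ (r : ℝ≥0∞)} = {ω | T ω ≤ (r : ℝ≥0∞)} ∩ C := by
      ext ω
      simp only [hCdef, mem_ofPred_eq, mem_inter_iff]
      constructor
      · rintro ⟨h1, h2⟩
        exact ⟨h2, h1, h1 ▸ h2.trans_lt ENNReal.coe_lt_top⟩
      · rintro ⟨h1, h2, -⟩
        exact ⟨h2, h1⟩
    have hcond := condExp_indicator (m := ⨆ t, F t) hCi (le_iSup F r _ (hT r))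
    rw [indicator_indicator, ← heq] at hcond
    exact (stronglyMeasurable_of_ae_eq (fun t ht => hmono (zero_le (a := r)) t (hcomp t ht))
      (hcond.symm.trans hD.symm) stronglyMeasurable_condExp).measurable

/-- If the conditional probability of `C` given `F_∞` is that given `F_T`, then the part of `C` in
`A ∩ {T ≤ s}` is stable at time `u`, for `A ∈ F u` and `s ≤ u`. -/
lemma condStable_piece (hmono : Monotone F) (hle : ∀ t, F t ≤ m𝒢) {T : Ω → ℝ≥0∞}
    (hT : IsStoppingTimeE F T) {C : Set Ω} (hC : MeasurableSet C)
    (h : P[C.indicator (fun _ => (1 : ℝ)) | ⨆ t : ℝ≥0, F t]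
        =ᵐ[P] P[C.indicator (fun _ => (1 : ℝ)) | stoppingSigma F T hT])
    {s u : ℝ≥0} (hsu : s ≤ u) {A : Set Ω} (hA : MeasurableSet[F u] A) :
    CondStable P F u ((A ∩ {ω | T ω ≤ (s : ℝ≥0∞)}) ∩ C) := by
  have hCi := integrable_indicator_one (P := P) hC
  refine condStable_of_aestronglyMeasurable hle
    ⟨A.indicator ({ω | T ω ≤ (s : ℝ≥0∞)}.indicator
      (P[C.indicator (fun _ => (1 : ℝ)) | stoppingSigma F T hT])),
      ((stronglyMeasurable_indicator_le hmono hle hT stronglyMeasurable_condExp s).mono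
        (hmono hsu)).indicator hA, ?_⟩
  have hAs : MeasurableSet[⨆ t, F t] (A ∩ {ω | T ω ≤ (s : ℝ≥0∞)}) :=
    (le_iSup F u _ hA).inter (le_iSup F s _ (hT s))
  have hcond := condExp_indicator (m := ⨆ t, F t) hCi hAs
  rw [indicator_indicator] at hcond
  refine hcond.trans ?_
  rw [indicator_indicator]
  filter_upwards [h] with x hx
  simp only [indicator, hx]

/-- Up to a null set, `A ∩ {τ ≤ s}` is the disjoint union of the sets
`A ∩ {T n ≤ s} ∩ {τ = T n < ∞}`, so stability spreads from these to the raw enlargement. -/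
lemma condStable_rawEnlarge (hmono : Monotone F) (hle : ∀ t, F t ≤ m𝒢) {τ : Ω → ℝ≥0∞}
    (hτ : Measurable τ) {T : ℕ → Ω → ℝ≥0∞} (hTst : ∀ n, IsStoppingTimeE F (T n))
    (hTdis : DisjointGraphs P T) (hTexh : ∀ᵐ ω ∂P, τ ω < ∞ → ∃ n, τ ω = T n ω)
    (h : ∀ n : ℕ,
        P[({ω | τ ω = T n ω ∧ τ ω < ∞}).indicator (fun _ => (1 : ℝ)) | ⨆ t : ℝ≥0, F t] =ᵐ[P]
        P[({ω | τ ω = T n ω ∧ τ ω < ∞}).indicator (fun _ => (1 : ℝ)) |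
            stoppingSigma F (T n) (hTst n)])
    {u : ℝ≥0} {D : Set Ω} (hD : MeasurableSet[rawEnlarge F τ u] D) : CondStable P F u D := by
  have hinf : (⨆ t, F t) ≤ m𝒢 := iSup_le hle
  have hraw := rawEnlarge_le hle hτ u
  rw [condStable_iff hle (hraw D hD)]
  intro A hA
  have hA' := hinf A hA
  have hAi := integrable_indicator_one (P := P) hA'
  rw [← generateFrom_rawPi] at hD hraw
  refine setIntegral_eq_of_piSystem (isPiSystem_rawPi F τ u) hraw hAi integrable_condExp
    (integral_condExp (hle u)).symm ?_ D hD
  rintro _ ⟨B, hB, rfl | ⟨s, hs, rfl⟩⟩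
  · exact (setIntegral_condExp (hle u) hAi hB).symm
  have hC : ∀ n, MeasurableSet {ω | τ ω = T n ω ∧ τ ω < ∞} := fun n =>
    (measurableSet_eq_fun hτ (measurable_stoppingTimeE hle (hTst n))).inter
      (measurableSet_lt hτ measurable_const)
  let E : ℕ → Set Ω := fun n =>
    (B ∩ {ω | T n ω ≤ (s : ℝ≥0∞)}) ∩ {ω | τ ω = T n ω ∧ τ ω < ∞}
  have hE : ∀ n, MeasurableSet (E n) := fun n =>
    ((hle u B hB).inter (hle s _ (hTst n s))).inter (hC n)
  have hEd : Pairwise (Function.onFun (AEDisjoint P) E) := by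
    intro n m hnm
    refine measure_mono_null ?_ (hTdis n m hnm)
    rintro ω ⟨⟨-, h1, h2⟩, ⟨-, h3, -⟩⟩
    exact ⟨h1.symm.trans h3, h1 ▸ h2⟩
  have hBE : (B ∩ {ω | τ ω ≤ (s : ℝ≥0∞)} : Set Ω) =ᵐ[P] ⋃ n, E n := by
    filter_upwards [hTexh] with ω hω
    apply propext
    change (ω ∈ B ∩ {ω | τ ω ≤ (s : ℝ≥0∞)}) ↔ ω ∈ ⋃ n, E n
    simp only [E, mem_inter_iff, mem_iUnion, mem_ofPred_eq]
    constructor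
    · rintro ⟨h1, h2⟩
      have hfin : τ ω < ∞ := h2.trans_lt ENNReal.coe_lt_top
      obtain ⟨n, hn⟩ := hω hfin
      exact ⟨n, ⟨h1, hn ▸ h2⟩, hn, hfin⟩
    · rintro ⟨n, ⟨h1, h2⟩, h3, -⟩
      exact ⟨h1, h3 ▸ h2⟩
  rw [setIntegral_congr_set hBE, setIntegral_congr_set hBE,
    ← (hasSum_integral_iUnion_ae (fun n => (hE n).nullMeasurableSet) hEd
      hAi.integrableOn).tsum_eq,
    ← (hasSum_integral_iUnion_ae (fun n => (hE n).nullMeasurableSet) hEd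
      integrable_condExp.integrableOn).tsum_eq]
  exact tsum_congr fun n =>
    (condStable_iff hle (hE n)).1 (condStable_piece hmono hle (hTst n) (hC n) (h n) hs hB) A hA

end Filtration

theorem immersion_iff_for_thin_time
    [m𝒢 : MeasurableSpace Ω] (P : Measure Ω) [IsProbabilityMeasure P]
    (F : ℝ≥0 → MeasurableSpace Ω) (hUC : UsualConditions P F)
    (τ : Ω → ℝ≥0∞) (hτ : Measurable τ)
    (T : ℕ → Ω → ℝ≥0∞) (hTst : ∀ n, IsStoppingTimeE F (T n))
    (hTdis : DisjointGraphs P T)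
    (hTexh : ∀ᵐ ω ∂P, τ ω < ∞ → ∃ n, τ ω = T n ω) :
    (Immersed P F (progEnlarge F τ) ↔
      ∀ n : ℕ,
        P[({ω | τ ω = T n ω ∧ τ ω < ∞}).indicator (fun _ => (1 : ℝ)) | ⨆ t : ℝ≥0, F t]
          =ᵐ[P]
        P[({ω | τ ω = T n ω ∧ τ ω < ∞}).indicator (fun _ => (1 : ℝ)) |
            stoppingSigma F (T n) (hTst n)]) ∧
    (Immersed P F (progEnlarge F τ) ↔
      ∀ n : ℕ, ∀ A : Set Ω, MeasurableSet[⨆ t : ℝ≥0, F t] A →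
        P[(({ω | τ ω = T n ω ∧ τ ω < ∞}) ∩ A).indicator (fun _ => (1 : ℝ)) |
            stoppingSigma F (T n) (hTst n)]
          =ᵐ[P]
        fun ω =>
          (P[({ω' | τ ω' = T n ω' ∧ τ ω' < ∞}).indicator (fun _ => (1 : ℝ)) |
              stoppingSigma F (T n) (hTst n)]) ω *
          (P[A.indicator (fun _ => (1 : ℝ)) | stoppingSigma F (T n) (hTst n)]) ω) := by
  have hUC' := hUC
  obtain ⟨hmono, hle, -, -⟩ := hUC'
  have key : Immersed P F (progEnlarge F τ) ↔ ∀ n : ℕ,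
        P[({ω | τ ω = T n ω ∧ τ ω < ∞}).indicator (fun _ => (1 : ℝ)) | ⨆ t : ℝ≥0, F t] =ᵐ[P]
        P[({ω | τ ω = T n ω ∧ τ ω < ∞}).indicator (fun _ => (1 : ℝ)) |
            stoppingSigma F (T n) (hTst n)] := by
    refine ⟨fun h n => condExp_eq_of_immersed hUC hτ h (hTst n), fun h => ?_⟩
    refine immersed_of_condStable hle (progEnlarge_le hle hτ)
      (fun t => (le_sup_left : F t ≤ rawEnlarge F τ t).trans (rawEnlarge_le_progEnlarge hmono τ t))
      fun s D hD => condStable_of_forall_gt hUC fun u hu => ?_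
    exact condStable_rawEnlarge hmono hle hτ hTst hTdis hTexh h
      (progEnlarge_le_rawEnlarge hu D hD)
  refine ⟨key, key.trans (forall_congr' fun n => ?_)⟩
  exact condExp_eq_iff_condIndep hmono hle (hTst n)
    ((measurableSet_eq_fun hτ (measurable_stoppingTimeE hle (hTst n))).inter
      (measurableSet_lt hτ measurable_const)) fun ω hω => hω.1.symm.trans_lt hω.2

end
end

section
/- Every random time τ admits a thin-thick decomposition: there exist random times τ₁ and τ₂ such that τ₁ is an F-thin time, τ₂ is an F-thick time, τ = τ₁ ∧ τ₂ P-a.s., and τ₁ ∨ τ₂ = ∞ P-a.s. -/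
/-!
A sequence `S` of stopping times covers the part `hitSet τ S` of `{τ < ∞}` on which `τ` agrees
with some `S n`. Interleaving countably many sequences into one shows that the supremum of
`P (hitSet τ S)` over all such `S` is attained (`exists_maximal_hitSet`). For a maximizer `S`,
a further stopping time can add only a null set to `A = hitSet τ S`, so `τ` restricted to `Aᶜ`
(and set to `∞` on `A`) is thick. The restriction of `τ` to `A` is thin: replacing `S n` by `∞`
wherever it agrees with an earlier `S k` yields stopping times with disjoint graphs (`disjTime`)
that cover the same part of `τ`.
-/

open MeasureTheory MeasurableSpace Set
open scoped NNReal ENNReal symmDiff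

noncomputable section

variable {Ω : Type*}

/-- The part of `{τ < ∞}` on which `τ` agrees with one of the times `S n`. -/
def hitSet (τ : Ω → ℝ≥0∞) (S : ℕ → Ω → ℝ≥0∞) : Set Ω :=
  {ω | τ ω < ∞ ∧ ∃ n, τ ω = S n ω}

open Classical in
/-- The time `S n`, set to `∞` wherever it agrees with some earlier `S k`, `k < n`. -/
def disjTime (S : ℕ → Ω → ℝ≥0∞) (n : ℕ) (ω : Ω) : ℝ≥0∞ :=
  if ∃ k < n, S k ω = S n ω then ∞ else S n ω

lemma IsStoppingTimeE.measurable_min {F : ℝ≥0 → MeasurableSpace Ω} (hF : Monotone F)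
    {T : Ω → ℝ≥0∞} (hT : IsStoppingTimeE F T) (t : ℝ≥0) :
    Measurable[F t] fun ω => min (T ω) (t : ℝ≥0∞) := by
  let _ : MeasurableSpace Ω := F t
  refine measurable_of_Iic fun s => ?_
  rcases le_or_gt (t : ℝ≥0∞) s with h | h
  · convert @MeasurableSet.univ Ω (F t)
    ext ω
    simp [h]
  · lift s to ℝ≥0 using (h.trans_le le_top).ne
    have hst : s ≤ t := by exact_mod_cast h.le
    convert hF hst _ (hT s) using 1
    ext ω
    simp only [Set.mem_preimage, Set.mem_Iic, Set.mem_ofPred_eq, min_le_iff]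
    exact or_iff_left (not_le.2 h)

lemma IsStoppingTimeE.measurable [m𝒢 : MeasurableSpace Ω] {F : ℝ≥0 → MeasurableSpace Ω}
    (hle : ∀ t, F t ≤ m𝒢) {T : Ω → ℝ≥0∞} (hT : IsStoppingTimeE F T) : Measurable T := by
  refine measurable_of_Iic fun s => ?_
  rcases eq_or_ne s ∞ with rfl | h
  · simp
  · lift s to ℝ≥0 using h
    exact hle s _ (hT s)

/-- On `{S n ≤ t}`, agreement of `S k` and `S n` is visible at time `t`, since it is agreement of
the `F t`-measurable truncations `S k ∧ t` and `S n ∧ t` together with `S k ≤ t`. -/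
lemma isStoppingTimeE_disjTime {F : ℝ≥0 → MeasurableSpace Ω} (hF : Monotone F)
    {S : ℕ → Ω → ℝ≥0∞} (hS : ∀ n, IsStoppingTimeE F (S n)) (n : ℕ) :
    IsStoppingTimeE F (disjTime S n) := by
  intro t
  have key : {ω | disjTime S n ω ≤ (t : ℝ≥0∞)} = {ω | S n ω ≤ (t : ℝ≥0∞)} \
      ⋃ k ∈ Set.Iio n, ({ω | S k ω ≤ (t : ℝ≥0∞)} ∩
        {ω | min (S k ω) (t : ℝ≥0∞) = min (S n ω) (t : ℝ≥0∞)}) := by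
    ext ω
    simp only [disjTime, Set.mem_ofPred_eq, Set.mem_sdiff, Set.mem_iUnion, Set.mem_inter_iff,
      Set.mem_Iio, exists_prop]
    split_ifs with h
    · obtain ⟨k, hk, he⟩ := h
      simp only [top_le_iff, ENNReal.coe_ne_top, false_iff, not_and, not_not]
      exact fun hn => ⟨k, hk, he ▸ hn, by rw [he]⟩
    · refine ⟨fun hn => ⟨hn, ?_⟩, fun hn => hn.1⟩
      rintro ⟨k, hk, hkt, he⟩
      rw [min_eq_left hkt, min_eq_left hn] at he
      exact h ⟨k, hk, he⟩
  rw [key]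
  refine @MeasurableSet.diff _ (F t) _ _ (hS n t) ?_
  refine @MeasurableSet.biUnion _ _ (F t) _ _ (Set.to_countable _) fun k _ => ?_
  exact @MeasurableSet.inter _ (F t) _ _ (hS k t)
    (measurableSet_eq_fun
      ((hS k).measurable_min hF t) ((hS n).measurable_min hF t))

lemma disjTime_ne (S : ℕ → Ω → ℝ≥0∞) {k n : ℕ} (h : k < n) {ω : Ω}
    (he : disjTime S k ω = disjTime S n ω) : disjTime S n ω = ∞ := by
  by_cases hn : ∃ j < n, S j ω = S n ω
  · simp [disjTime, hn]
  · by_cases hk : ∃ j < k, S j ω = S k ω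
    · rw [← he]; simp [disjTime, hk]
    · rw [disjTime, disjTime, if_neg hn, if_neg hk] at he
      exact absurd ⟨k, h, he⟩ hn

lemma exists_disjTime_eq (S : ℕ → Ω → ℝ≥0∞) (n : ℕ) (ω : Ω) :
    ∃ m, disjTime S m ω = S n ω := by
  classical
  have hex : ∃ m, S m ω = S n ω := ⟨n, rfl⟩
  -- The first index attaining the value is the one that is not erased.
  refine ⟨Nat.find hex, ?_⟩
  rw [disjTime, if_neg, Nat.find_spec hex]
  rintro ⟨k, hk, he⟩
  exact Nat.find_min hex hk (he.trans (Nat.find_spec hex))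

lemma measurableSet_hitSet [MeasurableSpace Ω] {τ : Ω → ℝ≥0∞} (hτ : Measurable τ)
    {S : ℕ → Ω → ℝ≥0∞} (hS : ∀ n, Measurable (S n)) : MeasurableSet (hitSet τ S) := by
  have : hitSet τ S = {ω | τ ω < ∞} ∩ ⋃ n, {ω | τ ω = S n ω} := by
    ext ω; simp [hitSet]
  rw [this]
  exact (measurableSet_lt hτ measurable_const).inter
    (MeasurableSet.iUnion fun n => measurableSet_eq_fun hτ (hS n))

lemma exists_maximal_hitSet [MeasurableSpace Ω] (P : Measure Ω)
    (F : ℝ≥0 → MeasurableSpace Ω) (τ : Ω → ℝ≥0∞) :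
    ∃ S : ℕ → Ω → ℝ≥0∞, (∀ n, IsStoppingTimeE F (S n)) ∧
      ∀ S' : ℕ → Ω → ℝ≥0∞, (∀ n, IsStoppingTimeE F (S' n)) →
        P (hitSet τ S') ≤ P (hitSet τ S) := by
  let V : Set ℝ≥0∞ := {x | ∃ S : ℕ → Ω → ℝ≥0∞,
    (∀ n, IsStoppingTimeE F (S n)) ∧ P (hitSet τ S) = x}
  have hV : V.Nonempty := ⟨_, fun _ _ => ∞, fun _ t => by simp, rfl⟩
  obtain ⟨u, -, hu, huV⟩ := exists_seq_tendsto_sSup hV (OrderTop.bddAbove V)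
  choose R hR hRu using huV
  -- All the approximating sequences are interleaved into a single one.
  refine ⟨fun k => R k.unpair.1 k.unpair.2, fun k => hR _ _, fun S' hS' => ?_⟩
  refine (le_sSup (show P (hitSet τ S') ∈ V from ⟨S', hS', rfl⟩)).trans ?_
  refine le_of_tendsto' hu fun i => ?_
  rw [← hRu i]
  refine measure_mono ?_
  rintro ω ⟨h, n, hn⟩
  exact ⟨h, Nat.pair i n, by simpa using hn⟩

theorem exists_thin_thick_decomposition
    [m𝒢 : MeasurableSpace Ω] (P : Measure Ω) [IsProbabilityMeasure P]
    (F : ℝ≥0 → MeasurableSpace Ω) (hUC : UsualConditions P F)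
    (τ : Ω → ℝ≥0∞) (hτ : Measurable τ) :
    ∃ τ₁ τ₂ : Ω → ℝ≥0∞, Measurable τ₁ ∧ Measurable τ₂ ∧
      ThinThickDecomp P F τ τ₁ τ₂ := by
  classical
  obtain ⟨hF, hle, -, -⟩ := hUC
  obtain ⟨S, hS, hmax⟩ := exists_maximal_hitSet P F τ
  have hA : MeasurableSet (hitSet τ S) :=
    measurableSet_hitSet hτ fun n => (hS n).measurable hle
  refine ⟨(hitSet τ S).piecewise τ fun _ => ∞, (hitSet τ S).piecewise (fun _ => ∞) τ,
    hτ.piecewise hA measurable_const, measurable_const.piecewise hA hτ,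
    ⟨disjTime S, isStoppingTimeE_disjTime hF hS, ?_, ?_⟩, ?_, ?_, ?_⟩
  · intro n m hnm
    refine measure_mono_null ?_ (measure_empty (μ := P))
    rintro ω ⟨he, hlt⟩
    rcases lt_or_gt_of_ne hnm with h | h
    · exact hlt.ne (he.trans (disjTime_ne S h he))
    · exact hlt.ne (disjTime_ne S h he.symm)
  · refine Filter.Eventually.of_forall fun ω hω => ?_
    by_cases h : ω ∈ hitSet τ S
    · obtain ⟨-, n, hn⟩ := id h
      obtain ⟨m, hm⟩ := exists_disjTime_eq S n ω
      exact ⟨m, by simp [h, hm, hn]⟩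
    · simp [h] at hω
  · intro T hT
    -- Prepending `T` to `S` cannot increase the measure, by maximality of `S`.
    let S' : ℕ → Ω → ℝ≥0∞ := fun n => Nat.casesOn n T S
    have hS' : ∀ n, IsStoppingTimeE F (S' n) := by
      rintro (_ | n)
      · exact hT
      · exact hS n
    have hsub : hitSet τ S ⊆ hitSet τ S' := fun ω ⟨h, n, hn⟩ => ⟨h, n + 1, hn⟩
    have hnull : P (hitSet τ S' \ hitSet τ S) = 0 := by
      rw [measure_sdiff hsub hA.nullMeasurableSet (measure_ne_top _ _)]
      exact tsub_eq_zero_of_le (hmax S' hS')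
    refine measure_mono_null ?_ hnull
    rintro ω ⟨he, hlt⟩
    by_cases h : ω ∈ hitSet τ S
    · simp [h] at hlt
    · simp only [h, not_false_eq_true, Set.piecewise_eq_of_notMem] at he hlt
      exact ⟨⟨hlt, 0, he⟩, h⟩
  · refine Filter.Eventually.of_forall fun ω => ?_
    by_cases h : ω ∈ hitSet τ S <;> simp [h]
  · refine Filter.Eventually.of_forall fun ω => ?_
    by_cases h : ω ∈ hitSet τ S <;> simp [h]

end
end

section
/- Let τ be a random time and (τ₁, τ₂) its thin-thick decomposition. Then for every t ≥ 0 the progressive enlargement of F with τ coincides with the progressive enlargement of F with the pair (τ₁, τ₂): F^τ_t = F^{τ₁,τ₂}_t, where F^{τ₁,τ₂}_t := ⋂_{s>t} ( F_s ∨ σ({τ₁ ≤ u} : u ≤ s) ∨ σ({τ₂ ≤ u} : u ≤ s) ). -/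
/-!
The two filtrations already agree before taking right limits: for every level `s`,
`F s ∨ σ({τ ≤ u} : u ≤ s)` equals `F s ∨ σ({τ₁ ≤ u} : u ≤ s) ∨ σ({τ₂ ≤ u} : u ≤ s)`.
Since `F` is complete, events may be modified on null sets.

For `⊆`, almost surely `{τ ≤ u} = {τ₁ ≤ u} ∪ {τ₂ ≤ u}`. For `⊇`, let `T n` exhaust `τ₁`. Because
`τ₁ ∨ τ₂ = ∞` and `τ₂` avoids every `T n`, almost surely `{τ₁ ≤ u} = ⋃ n, {τ = T n ≤ u}`, and
each of these events is observable from `F u` and `τ` up to time `u`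
(`measurableSet_eq_and_le`). Finally, almost surely `{τ₂ ≤ u} = {τ ≤ u} \ {τ₁ ≤ u}`.
-/

open MeasureTheory MeasurableSpace Set
open scoped NNReal ENNReal symmDiff

noncomputable section

variable {Ω : Type*}

/-- A time whose events `{f ≤ q}`, `q ≤ s`, are all measurable is measurable once capped at `s`. -/
lemma measurable_min_of_forall_le {m : MeasurableSpace Ω} {f : Ω → ℝ≥0∞} {s : ℝ≥0}
    (hf : ∀ q : ℝ≥0, q ≤ s → MeasurableSet {ω | f ω ≤ (q : ℝ≥0∞)}) :
    Measurable fun ω => min (f ω) (s : ℝ≥0∞) := by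
  refine measurable_of_Iic fun a => ?_
  by_cases h : (s : ℝ≥0∞) ≤ a
  · have : (fun ω => min (f ω) (s : ℝ≥0∞)) ⁻¹' Iic a = univ := by
      ext ω; simp [h]
    rw [this]; exact MeasurableSet.univ
  · have h' := not_le.1 h
    lift a to ℝ≥0 using h'.ne_top
    have : (fun ω => min (f ω) (s : ℝ≥0∞)) ⁻¹' Iic (a : ℝ≥0∞) = {ω | f ω ≤ (a : ℝ≥0∞)} := by
      ext ω; simp only [mem_preimage, mem_Iic, min_le_iff, h, or_false, mem_ofPred_eq]
    rw [this]
    exact hf a (by exact_mod_cast h'.le)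

/-- Whether two times coincide no later than `s` can be decided from their behaviour up to `s`. -/
lemma measurableSet_eq_and_le {m : MeasurableSpace Ω} {f g : Ω → ℝ≥0∞} {s : ℝ≥0}
    (hf : ∀ q : ℝ≥0, q ≤ s → MeasurableSet {ω | f ω ≤ (q : ℝ≥0∞)})
    (hg : ∀ q : ℝ≥0, q ≤ s → MeasurableSet {ω | g ω ≤ (q : ℝ≥0∞)}) :
    MeasurableSet {ω | f ω = g ω ∧ f ω ≤ (s : ℝ≥0∞)} := by
  have : {ω | f ω = g ω ∧ f ω ≤ (s : ℝ≥0∞)}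
      = {ω | min (f ω) (s : ℝ≥0∞) = min (g ω) (s : ℝ≥0∞)}
        ∩ ({ω | f ω ≤ (s : ℝ≥0∞)} ∩ {ω | g ω ≤ (s : ℝ≥0∞)}) := by
    ext ω
    simp only [mem_ofPred_eq, mem_inter_iff]
    constructor
    · rintro ⟨h1, h2⟩
      exact ⟨by rw [h1], h2, h1 ▸ h2⟩
    · rintro ⟨h1, h2, h3⟩
      rw [min_eq_left h2, min_eq_left h3] at h1
      exact ⟨h1, h2⟩
  rw [this]
  exact (measurableSet_eq_fun (measurable_min_of_forall_le hf)
    (measurable_min_of_forall_le hg)).inter ((hf s le_rfl).inter (hg s le_rfl))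

/-- A σ-algebra `m` containing all null sets of `P` is stable under almost sure equality of events. -/
lemma measurableSet_of_ae_iff {m m𝒢 : MeasurableSpace Ω} {P : Measure Ω}
    (hm : ∀ s : Set Ω, P s = 0 → MeasurableSet[m] s) {A B : Set Ω}
    (hB : MeasurableSet[m] B) (hAB : ∀ᵐ ω ∂P, ω ∈ A ↔ ω ∈ B) : MeasurableSet[m] A := by
  have h1 : P (A \ B) = 0 := measure_mono_null (fun ω hω => by
    exact fun h => hω.2 (h.1 hω.1)) (ae_iff.1 hAB)
  have h2 : P (B \ A) = 0 := measure_mono_null (fun ω hω => by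
    exact fun h => hω.2 (h.2 hω.1)) (ae_iff.1 hAB)
  have : A = (B \ (B \ A)) ∪ (A \ B) := by
    ext ω; simp only [mem_union, mem_sdiff]; tauto
  rw [this]
  exact MeasurableSet.union (MeasurableSet.diff hB (hm _ h2)) (hm _ h1)

theorem progEnlarge_eq_double_enlargement
    [m𝒢 : MeasurableSpace Ω] (P : Measure Ω) [IsProbabilityMeasure P]
    (F : ℝ≥0 → MeasurableSpace Ω) (hUC : UsualConditions P F)
    (τ τ₁ τ₂ : Ω → ℝ≥0∞) (hτ : Measurable τ) (hτ₁ : Measurable τ₁) (hτ₂ : Measurable τ₂)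
    (hdec : ThinThickDecomp P F τ τ₁ τ₂) :
    ∀ t : ℝ≥0, progEnlarge F τ t =
      ⨅ s ∈ Set.Ioi t, (F s
        ⊔ MeasurableSpace.generateFrom
            {A : Set Ω | ∃ u : ℝ≥0, u ≤ s ∧ A = {ω | τ₁ ω ≤ (u : ℝ≥0∞)}}
        ⊔ MeasurableSpace.generateFrom
            {A : Set Ω | ∃ u : ℝ≥0, u ≤ s ∧ A = {ω | τ₂ ω ≤ (u : ℝ≥0∞)}}) := by
  obtain ⟨hmono, -, -, hnull⟩ := hUC
  obtain ⟨⟨T, hT, -, hexh⟩, hthick, hmin, hmax⟩ := hdec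
  intro t
  unfold progEnlarge
  refine iInf_congr fun s => iInf_congr fun _ => le_antisymm ?_ ?_
  · refine sup_le (le_sup_left.trans le_sup_left) (generateFrom_le ?_)
    rintro _ ⟨u, hu, rfl⟩
    set m := F s
        ⊔ MeasurableSpace.generateFrom
            {A : Set Ω | ∃ u : ℝ≥0, u ≤ s ∧ A = {ω | τ₁ ω ≤ (u : ℝ≥0∞)}}
        ⊔ MeasurableSpace.generateFrom
            {A : Set Ω | ∃ u : ℝ≥0, u ≤ s ∧ A = {ω | τ₂ ω ≤ (u : ℝ≥0∞)}} with hm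
    have hF : F s ≤ m := le_sup_left.trans le_sup_left
    have h1 : MeasurableSet[m] {ω | τ₁ ω ≤ (u : ℝ≥0∞)} :=
      (le_sup_right.trans le_sup_left : _ ≤ m) _ (measurableSet_generateFrom ⟨u, hu, rfl⟩)
    have h2 : MeasurableSet[m] {ω | τ₂ ω ≤ (u : ℝ≥0∞)} :=
      (le_sup_right : _ ≤ m) _ (measurableSet_generateFrom ⟨u, hu, rfl⟩)
    refine measurableSet_of_ae_iff (P := P)
      (fun A hA => hF _ (hmono zero_le _ (hnull A hA))) (MeasurableSet.union h1 h2) ?_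
    filter_upwards [hmin] with ω hω
    simp [hω]
  · set m := F s ⊔ MeasurableSpace.generateFrom
      {A : Set Ω | ∃ u : ℝ≥0, u ≤ s ∧ A = {ω | τ ω ≤ (u : ℝ≥0∞)}} with hm
    have hF : F s ≤ m := le_sup_left
    have hN : ∀ A : Set Ω, P A = 0 → MeasurableSet[m] A :=
      fun A hA => hF _ (hmono zero_le _ (hnull A hA))
    have hτm : ∀ u : ℝ≥0, u ≤ s → MeasurableSet[m] {ω | τ ω ≤ (u : ℝ≥0∞)} := fun u hu =>
      (le_sup_right : _ ≤ m) _ (measurableSet_generateFrom ⟨u, hu, rfl⟩)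
    have hτ₁m : ∀ u : ℝ≥0, u ≤ s → MeasurableSet[m] {ω | τ₁ ω ≤ (u : ℝ≥0∞)} := by
      intro u hu
      have hU : MeasurableSet[m] (⋃ n, {ω | τ ω = T n ω ∧ τ ω ≤ (u : ℝ≥0∞)}) :=
        MeasurableSet.iUnion fun n => measurableSet_eq_and_le
          (fun q hq => hτm q (hq.trans hu))
          (fun q hq => hF _ (hmono (hq.trans hu) _ (hT n q)))
      refine measurableSet_of_ae_iff (P := P) hN hU ?_
      have havoid : ∀ᵐ ω ∂P, ∀ n, ¬ (τ₂ ω = T n ω ∧ τ₂ ω < ∞) := by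
        rw [ae_all_iff]
        intro n
        rw [ae_iff]
        simpa only [not_not] using hthick (T n) (hT n)
      filter_upwards [hmin, hmax, hexh, havoid] with ω h1 h2 h3 h4
      simp only [mem_ofPred_eq, mem_iUnion]
      constructor
      · intro h
        obtain ⟨n, hn⟩ := h3 (h.trans_lt ENNReal.coe_lt_top)
        have hle : τ ω = τ₁ ω := by
          rcases max_eq_top.1 h2 with h5 | h5
          · exact absurd h5 (h.trans_lt ENNReal.coe_lt_top).ne
          · rw [h1, h5]; simp
        exact ⟨n, hle.trans hn, hle ▸ h⟩
      · rintro ⟨n, hn, hle⟩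
        rcases min_choice (τ₁ ω) (τ₂ ω) with h5 | h5
        · rw [← h5, ← h1]; exact hle
        · have h6 : τ₂ ω = τ ω := by rw [h1, h5]
          exact absurd ⟨h6.trans hn, h6 ▸ hle.trans_lt ENNReal.coe_lt_top⟩ (h4 n)
    refine sup_le (sup_le hF (generateFrom_le ?_)) (generateFrom_le ?_)
    · rintro _ ⟨u, hu, rfl⟩
      exact hτ₁m u hu
    · rintro _ ⟨u, hu, rfl⟩
      refine measurableSet_of_ae_iff (P := P) hN
        (MeasurableSet.diff (hτm u hu) (hτ₁m u hu)) ?_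
      filter_upwards [hmin, hmax] with ω h1 h2
      simp only [mem_ofPred_eq, mem_sdiff, h1, min_le_iff]
      constructor
      · intro h
        rcases max_eq_top.1 h2 with h5 | h5
        · exact ⟨Or.inr h, by simp [h5]⟩
        · simp [h5] at h
      · rintro ⟨h | h, h'⟩
        · exact absurd h h'
        · exact h

end
end
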